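/- (Klivans–Swartz relation) Let 𝒜 be a hyperplane arrangement in ℝ^n and d the common dimension of its minimal flats. For every j with 0 ≤ j ≤ rk(𝒜), the coefficient of t^j in the characteristic polynomial χ(𝒜, t) equals (−1)^{rk(𝒜) − j} Σ_C v_{j+d}(cl C), where the sum is over all chambers C of 𝒜. -/

import Mathlib

open Finset MeasureTheory

noncomputable section

namespace CharElts

/-- Ambient Euclidean space `ℝ^n`. -/
abbrev V (n : ℕ) := EuclideanSpace ℝ (Fin n)

/-- An affine functional on `ℝ^n`; a hyperplane is its zero set. -/
abbrev AffForm (n : ℕ) := V n →ᵃ[ℝ] ℝ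

/-- The hyperplane determined by an affine functional. -/
def hypSet {n : ℕ} (ℓ : AffForm n) : Set (V n) := {x | ℓ x = 0}

variable {n : ℕ} (𝒜 : Finset (AffForm n))

/-- Index type for the hyperplanes of the arrangement. -/
abbrev Idx := {ℓ : AffForm n // ℓ ∈ 𝒜}

/-- The (possibly empty) set cut out by a sign vector `σ`. -/
def faceSet (σ : Idx 𝒜 → SignType) : Set (V n) :=
  {x | ∀ ℓ : Idx 𝒜, SignType.sign (ℓ.1 x) = σ ℓ}

/-- A face of the arrangement: a sign vector whose face set is nonempty. -/
@[ext] structure Face where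
  sgn : Idx 𝒜 → SignType
  nonempty : (faceSet 𝒜 sgn).Nonempty

open Classical in
instance : Fintype (Face 𝒜) :=
  Fintype.ofInjective Face.sgn (fun F G h => by cases F; cases G; simpa using h)

/-- The underlying point set of a face. -/
def Face.carrier (F : Face 𝒜) : Set (V n) := faceSet 𝒜 F.sgn

/-- A flat: a nonempty intersection of some subcollection of the hyperplanes
(the empty intersection gives all of `ℝ^n`). -/
def IsFlat (X : Set (V n)) : Prop :=
  X.Nonempty ∧ ∃ P : Idx 𝒜 → Prop, X = ⋂ ℓ ∈ {ℓ : Idx 𝒜 | P ℓ}, hypSet ℓ.1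

/-- The poset of flats, ordered by inclusion. -/
def Flat := {X : Set (V n) // IsFlat 𝒜 X}

instance : PartialOrder (Flat 𝒜) :=
  inferInstanceAs (PartialOrder {X : Set (V n) // IsFlat 𝒜 X})

lemma flat_eq_inter (X : Flat 𝒜) :
    X.1 = ⋂ ℓ ∈ {ℓ : Idx 𝒜 | X.1 ⊆ hypSet ℓ.1}, hypSet ℓ.1 := by
  obtain ⟨Z, hne, P, rfl⟩ := X
  apply subset_antisymm
  · intro x hx
    simp only [Set.mem_iInter, Set.mem_setOf_eq]
    intro ℓ hℓ
    exact hℓ hx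
  · intro x hx
    simp only [Set.mem_iInter, Set.mem_setOf_eq] at hx ⊢
    intro ℓ hℓ
    refine hx ℓ ?_
    intro y hy
    simp only [Set.mem_iInter, Set.mem_setOf_eq] at hy
    exact hy ℓ hℓ

open Classical in
instance : Fintype (Flat 𝒜) :=
  Fintype.ofInjective (fun X : Flat 𝒜 => {ℓ : Idx 𝒜 | X.1 ⊆ hypSet ℓ.1}) <| by
    intro X Y h
    dsimp only at h
    apply Subtype.ext
    rw [flat_eq_inter 𝒜 X, flat_eq_inter 𝒜 Y, h]

/-- The top flat: the whole ambient space. -/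
def topFlat : Flat 𝒜 :=
  ⟨Set.univ, ⟨⟨0, trivial⟩, fun _ => False, by simp⟩⟩

/-- The support of a face: the intersection of the hyperplanes on which it lies. -/
def supp (F : Face 𝒜) : Flat 𝒜 :=
  ⟨⋂ ℓ ∈ {ℓ : Idx 𝒜 | F.sgn ℓ = 0}, hypSet ℓ.1, by
    constructor
    · obtain ⟨x, hx⟩ := F.nonempty
      refine ⟨x, ?_⟩
      simp only [Set.mem_iInter, Set.mem_setOf_eq]
      intro ℓ hℓ
      have h0 := hx ℓ
      rw [hℓ] at h0
      simpa [hypSet, sign_eq_zero_iff] using h0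
    · exact ⟨fun ℓ => F.sgn ℓ = 0, rfl⟩⟩

/-- The dimension of (the affine hull of) a subset of `ℝ^n`. -/
def dimS (X : Set (V n)) : ℕ := Module.finrank ℝ (vectorSpan ℝ X)

open Classical in
/-- An element `w = Σ_F w^F H_F` of the Tits algebra (recorded by its coefficient
vector) is *characteristic of parameter `t`* if for every flat `X`, the sum of the
coefficients of the faces with support contained in `X` equals `t ^ rk X`,
where `rk X = dim X - d` and `d` is the common dimension of the minimal flats. -/
def IsCharacteristic (d : ℕ) (w : Face 𝒜 → ℝ) (t : ℝ) : Prop :=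
  ∀ X : Flat 𝒜,
    (∑ F : Face 𝒜, if (supp 𝒜 F).1 ⊆ X.1 then w F else 0) = t ^ (dimS X.1 - d)

/-- The sign vector of the Tits product `FG` of two faces. -/
def combineSgn {I : Type*} (σ τ : I → SignType) : I → SignType :=
  fun ℓ => if σ ℓ = 0 then τ ℓ else σ ℓ

open Classical in
/-- The product of the Tits algebra, on coefficient vectors:
`(u·v)^C = Σ_{F,G : FG = C} u^F v^G`, extending `H_F · H_G = H_{FG}` bilinearly. -/
def mulT (u v : Face 𝒜 → ℝ) : Face 𝒜 → ℝ :=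
  fun C => ∑ F : Face 𝒜, ∑ G : Face 𝒜,
    if combineSgn F.sgn G.sgn = C.sgn then u F * v G else 0

open Classical in
/-- The basis element `H_F` of the Tits algebra, as a coefficient vector. -/
def unitV (F : Face 𝒜) : Face 𝒜 → ℝ := fun G => if G = F then 1 else 0

/-- A chamber: a face whose sign vector is nowhere zero. -/
def IsChamber (F : Face 𝒜) : Prop := ∀ ℓ : Idx 𝒜, F.sgn ℓ ≠ 0

open Classical in
/-- `IsMoebius 𝒜 μ` states that `μ` is the Möbius function of the poset of
flats of `𝒜` (these conditions determine `μ` uniquely). -/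
def IsMoebius (μ : Flat 𝒜 → Flat 𝒜 → ℝ) : Prop :=
  (∀ X, μ X X = 1) ∧
  (∀ X Y : Flat 𝒜, X < Y →
    (∑ Z : Flat 𝒜, if X ≤ Z ∧ Z ≤ Y then μ X Z else 0) = 0) ∧
  (∀ X Y : Flat 𝒜, ¬ X ≤ Y → μ X Y = 0)

open Classical in
/-- `χ(𝒜^X, t) = Σ_{Y ≤ X} μ(Y, X) t^{rk Y}`: the characteristic polynomial of the
arrangement under the flat `X`.  Taking `X = ⊤` gives the characteristic
polynomial of `𝒜` itself. -/
def charPolyUnder (μ : Flat 𝒜 → Flat 𝒜 → ℝ) (d : ℕ) (X : Flat 𝒜) (t : ℝ) : ℝ :=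
  ∑ Y : Flat 𝒜, if Y ≤ X then μ Y X * t ^ (dimS Y.1 - d) else 0

/-- The space of directions `L = ⋂_{H ∈ 𝒜} dir(H)`: the intersection of the kernels of
the linear parts of the defining functionals. -/
def dirL : Submodule ℝ (V n) := ⨅ ℓ : Idx 𝒜, LinearMap.ker ℓ.1.linear

/-- A face is essentially bounded if its image in `ℝ^n / L` is bounded. -/
def EssBounded (F : Face 𝒜) : Prop :=
  Bornology.IsBounded ((dirL 𝒜).mkQ '' F.carrier)

/-- A hyperplane (zero set of a nonconstant affine functional) is nonempty. -/
lemma hyp_nonempty (ℓ : AffForm n) (h : ℓ.linear ≠ 0) : (hypSet ℓ).Nonempty := by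
  obtain ⟨v, hv⟩ : ∃ v, ℓ.linear v ≠ 0 := by
    by_contra hc
    push_neg at hc
    exact h (LinearMap.ext fun v => hc v)
  refine ⟨((-ℓ 0) / (ℓ.linear v)) • v, ?_⟩
  have hdecomp : ℓ (((-ℓ 0) / (ℓ.linear v)) • v)
      = ℓ.linear (((-ℓ 0) / (ℓ.linear v)) • v) + ℓ 0 := by
    conv_lhs => rw [show ((-ℓ 0) / (ℓ.linear v)) • v = ((-ℓ 0) / (ℓ.linear v)) • v +ᵥ (0 : V n)
      from (add_zero _).symm]
    rw [AffineMap.map_vadd]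
    rfl
  show ℓ _ = 0
  rw [hdecomp, LinearMap.map_smul, smul_eq_mul, div_mul_cancel₀ _ hv, neg_add_cancel]

/-- The set of nearest points of `P` to `x`. -/
def nearestPts {n : ℕ} (P : Set (V n)) (x : V n) : Set (V n) :=
  {y ∈ P | ∀ z ∈ P, dist x y ≤ dist x z}

/-- Faces of a polyhedron `P`: `P` itself, or a nonempty subset of the form
`{x ∈ P | ℓ x = sup_P ℓ}` for a linear functional `ℓ` bounded above on `P`. -/
def IsPolyFace {n : ℕ} (P Q : Set (V n)) : Prop :=
  Q = P ∨ (Q.Nonempty ∧ ∃ ℓ : V n →ₗ[ℝ] ℝ, BddAbove (ℓ '' P) ∧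
    Q = {x ∈ P | ℓ x = sSup (ℓ '' P)})

/-- `S_k(P)`: the set of points of `ℝ^n` whose nearest point in `P` lies in the
relative interior of some `k`-dimensional face of `P`. -/
def projSet {n : ℕ} (P : Set (V n)) (k : ℕ) : Set (V n) :=
  {x | ∃ y ∈ nearestPts P x, ∃ Q : Set (V n),
    IsPolyFace P Q ∧ dimS Q = k ∧ y ∈ intrinsicInterior ℝ Q}

/-- `HasIntrinsicVolumes P v` says that for each `k`, the proportion of the volume of
space occupied by `S_k(P)` exists and equals `v k`, i.e.
`v_k(P) = lim_{R→∞} vol(S_k(P) ∩ B(0,R)) / vol(B(0,R))`. -/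
def HasIntrinsicVolumes {n : ℕ} (P : Set (V n)) (v : ℕ → ℝ) : Prop :=
  ∀ k : ℕ, Filter.Tendsto
    (fun R : ℝ =>
      (volume (projSet P k ∩ Metric.ball (0 : V n) R)).toReal /
        (volume (Metric.ball (0 : V n) R)).toReal)
    Filter.atTop (nhds (v k))

/-!
Fix a dimension `k`. For almost every `x`, the number of chambers whose closure has its point
nearest to `x` in the relative interior of a `k`-dimensional face is, up to the sign `(-1)^(n+k)`,
Whitney's sum of `(-1)^|S|` over the subsets `S` of the arrangement that cut out a `k`-dimensional
flat. Both sides satisfy a deletion–restriction recursion: when a hyperplane `H` cuts a cell, the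
half that contains the nearest point of the cell inherits it, while the nearest point of the other
half lies on `H` and is the nearest point of the corresponding cell of the arrangement induced on
`H`. Genericity of `x` ensures that the nearest point lies on `H` only if its minimal flat does.
Averaging over large balls turns the count into `Σ_C v_k(cl C)`, and Whitney's formula identifies
the signed sum over subsets with `Σ_{dim Y = k} μ(Y, ⊤)`.
-/

section NearestPoint

/-- `p` is a point of `K` at minimal distance from `x`: membership in `nearestPts`, in a general
metric space. -/
def IsNearest {X : Type*} [PseudoMetricSpace X] (K : Set X) (x p : X) : Prop :=
  p ∈ K ∧ ∀ z ∈ K, dist x p ≤ dist x z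

lemma IsNearest.mono {X : Type*} [PseudoMetricSpace X] {K L : Set X} {x p : X}
    (h : IsNearest K x p) (hLK : L ⊆ K) (hp : p ∈ L) : IsNearest L x p :=
  ⟨hp, fun z hz => h.2 z (hLK hz)⟩

lemma IsNearest.of_mem_nhdsWithin {E : Type*} [SeminormedAddCommGroup E] [NormedSpace ℝ E]
    {K L : Set E} {x p : E} (h : IsNearest L x p) (hK : Convex ℝ K) (hp : p ∈ K)
    (hL : L ∈ nhdsWithin p K) : IsNearest K x p := by
  have hlocal : IsLocalMinOn (fun z => dist z x) K p := by
    filter_upwards [hL] with z hz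
    simpa only [dist_comm x] using h.2 z hz
  have hmin := IsMinOn.of_isLocalMinOn_of_convexOn hp hlocal (convexOn_dist x hK)
  exact ⟨hp, fun z hz => by simpa only [dist_comm x] using isMinOn_iff.1 hmin z hz⟩

variable {E : Type*} [NormedAddCommGroup E] [InnerProductSpace ℝ E] {K : Set E} {x y p q : E}

lemma isNearest_iff_inner_le_zero (hK : Convex ℝ K) (hp : p ∈ K) :
    IsNearest K x p ↔ ∀ z ∈ K, inner ℝ (x - p) (z - p) ≤ 0 := by
  have : Nonempty K := ⟨⟨p, hp⟩⟩
  rw [← norm_eq_iInf_iff_real_inner_le_zero hK hp]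
  have hbdd : BddBelow (Set.range fun z : K => ‖x - z‖) :=
    ⟨0, Set.forall_mem_range.2 fun _ => norm_nonneg _⟩
  simp only [IsNearest, dist_eq_norm, hp, true_and]
  exact ⟨fun h => le_antisymm (le_ciInf fun z => h z z.2) (ciInf_le hbdd ⟨p, hp⟩),
    fun h z hz => h.trans_le (ciInf_le hbdd ⟨z, hz⟩)⟩

lemma exists_isNearest [CompleteSpace E] (hK : Convex ℝ K) (hcl : IsClosed K) (hne : K.Nonempty)
    (x : E) : ∃ p, IsNearest K x p := by
  obtain ⟨p, hp, h⟩ := exists_norm_eq_iInf_of_complete_convex hne hcl.isComplete hK x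
  exact ⟨p, (isNearest_iff_inner_le_zero hK hp).2
    ((norm_eq_iInf_iff_real_inner_le_zero hK hp).1 h)⟩

lemma IsNearest.dist_le (hK : Convex ℝ K) (hp : IsNearest K x p) (hq : IsNearest K y q) :
    dist p q ≤ dist x y := by
  have hpq : inner ℝ (x - p) (q - p) ≤ 0 := (isNearest_iff_inner_le_zero hK hp.1).1 hp q hq.1
  have hqp : inner ℝ (y - q) (p - q) ≤ 0 := (isNearest_iff_inner_le_zero hK hq.1).1 hq p hp.1
  have hsq : ‖p - q‖ * ‖p - q‖ ≤ ‖x - y‖ * ‖p - q‖ := calc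
    ‖p - q‖ * ‖p - q‖ = inner ℝ (p - q) (p - q) := (real_inner_self_eq_norm_mul_norm _).symm
    _ = inner ℝ (x - y) (p - q) + inner ℝ (x - p) (q - p) + inner ℝ (y - q) (p - q) := by
      simp only [inner_sub_left, inner_sub_right]; ring
    _ ≤ inner ℝ (x - y) (p - q) := by linarith
    _ ≤ ‖x - y‖ * ‖p - q‖ := real_inner_le_norm _ _
  rw [dist_eq_norm, dist_eq_norm]
  rcases (norm_nonneg (p - q)).eq_or_lt with h | h
  · exact h ▸ norm_nonneg _
  · exact le_of_mul_le_mul_right hsq h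

lemma IsNearest.unique (hK : Convex ℝ K) (hp : IsNearest K x p) (hq : IsNearest K x q) : p = q :=
  dist_le_zero.1 (by simpa using hp.dist_le hK hq)

end NearestPoint

lemma affineMap_eq_of_isLocalMinOn {E : Type*} [AddCommGroup E] [Module ℝ E] [TopologicalSpace E]
    [IsTopologicalAddGroup E] [ContinuousSMul ℝ E] (g : E →ᵃ[ℝ] ℝ) {F : AffineSubspace ℝ E}
    {p z : E} (hp : p ∈ F) (hmin : IsLocalMinOn g F p) (hz : z ∈ F) : g z = g p := by
  have hle : ∀ w ∈ F, g p ≤ g w := fun w hw =>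
    IsMinOn.of_isLocalMinOn_of_convexOn hp hmin
      ((convexOn_id convex_univ).comp_affineMap g |>.subset (Set.subset_univ _) F.convex) hw
  have hreflect : g (AffineMap.lineMap z p (2 : ℝ)) = 2 * g p - g z := by
    rw [AffineMap.apply_lineMap, AffineMap.lineMap_apply_module]
    simp only [smul_eq_mul]; ring
  have := hle _ (AffineMap.lineMap_mem 2 hz hp)
  exact le_antisymm (by linarith) (hle z hz)

section Flat

variable {E : Type*} [AddCommGroup E] [Module ℝ E] {F : AffineSubspace ℝ E}
  {S B : Finset (E →ᵃ[ℝ] ℝ)} {ℓ : E →ᵃ[ℝ] ℝ} {p z : E}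

/-- The zero set of an affine functional; all of `E`, or empty, if the functional is constant. -/
def hyperplane (ℓ : E →ᵃ[ℝ] ℝ) : AffineSubspace ℝ E := (affineSpan ℝ {0}).comap ℓ

@[simp] lemma mem_hyperplane : p ∈ hyperplane ℓ ↔ ℓ p = 0 := by
  rw [hyperplane, AffineSubspace.mem_comap, AffineSubspace.mem_affineSpan_singleton]

lemma hyperplane_neg (ℓ : E →ᵃ[ℝ] ℝ) : hyperplane (-ℓ) = hyperplane ℓ := by
  ext; simp

/-- The dimension of an affine subspace, with the junk value `0` for the empty one. -/
def affineDim (F : AffineSubspace ℝ E) : ℕ := Module.finrank ℝ F.direction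

lemma affineDim_inf_hyperplane [FiniteDimensional ℝ E] (hp : p ∈ F ⊓ hyperplane ℓ)
    (hz : z ∈ F) (hℓz : ℓ z ≠ 0) :
    affineDim (F ⊓ hyperplane ℓ) + 1 = affineDim F := by
  obtain ⟨hpF, hpℓ⟩ := hp
  have hdir : (hyperplane ℓ).direction = LinearMap.ker ℓ.linear := by
    ext u
    rw [← AffineSubspace.vadd_mem_iff_mem_direction u hpℓ, mem_hyperplane, AffineMap.map_vadd,
      mem_hyperplane.1 hpℓ, vadd_eq_add, add_zero, LinearMap.mem_ker]
  have hne : ℓ.linear.domRestrict F.direction ≠ 0 := fun h => hℓz <| by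
    have := LinearMap.congr_fun h ⟨z -ᵥ p, AffineSubspace.vsub_mem_direction hz hpF⟩
    rwa [LinearMap.domRestrict_apply, AffineMap.linearMap_vsub, mem_hyperplane.1 hpℓ, vsub_eq_sub,
      sub_zero] at this
  rw [affineDim, affineDim, AffineSubspace.direction_inf_of_mem hpF hpℓ, hdir,
    ← Module.Dual.finrank_ker_add_one_of_ne_zero hne, LinearMap.ker_domRestrict,
    ← Submodule.map_comap_subtype, Submodule.finrank_map_subtype_eq]

/-- The intersection of `F` with the zero sets of the functionals in `S`. -/
def flat (F : AffineSubspace ℝ E) (S : Finset (E →ᵃ[ℝ] ℝ)) : AffineSubspace ℝ E :=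
  F ⊓ ⨅ ℓ ∈ S, hyperplane ℓ

lemma mem_flat : p ∈ flat F S ↔ p ∈ F ∧ ∀ ℓ ∈ S, ℓ p = 0 := by
  simp [flat, AffineSubspace.mem_inf_iff, AffineSubspace.mem_iInf_iff]

@[simp] lemma flat_empty (F : AffineSubspace ℝ E) : flat F ∅ = F := by
  simp [flat]

open scoped Classical in
lemma flat_insert (F : AffineSubspace ℝ E) (ℓ : E →ᵃ[ℝ] ℝ) (S : Finset (E →ᵃ[ℝ] ℝ)) :
    flat F (insert ℓ S) = flat (F ⊓ hyperplane ℓ) S := by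
  rw [flat, flat, Finset.iInf_insert, inf_assoc]

/-- The smallest flat through `p`: the intersection of `F` with the zero sets of the functionals
in `B` that vanish at `p`. -/
def minFlat (F : AffineSubspace ℝ E) (B : Finset (E →ᵃ[ℝ] ℝ)) (p : E) : AffineSubspace ℝ E :=
  flat F {ℓ ∈ B | ℓ p = 0}

lemma mem_minFlat : z ∈ minFlat F B p ↔ z ∈ F ∧ ∀ ℓ ∈ B, ℓ p = 0 → ℓ z = 0 := by
  simp [minFlat, mem_flat]

lemma self_mem_minFlat (hp : p ∈ F) : p ∈ minFlat F B p := mem_minFlat.2 ⟨hp, fun _ _ h => h⟩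

open scoped Classical in
lemma minFlat_insert_of_eq_zero (h : ℓ p = 0) :
    minFlat F (insert ℓ B) p = minFlat (F ⊓ hyperplane ℓ) B p := by
  rw [minFlat, filter_insert, if_pos h, flat_insert, minFlat]

lemma minFlat_inf_hyperplane :
    minFlat (F ⊓ hyperplane ℓ) B p = minFlat F B p ⊓ hyperplane ℓ := by
  simp only [minFlat, flat, inf_right_comm]

open scoped Classical in
lemma minFlat_insert (h : ℓ p = 0 → minFlat F B p ≤ hyperplane ℓ) :
    minFlat F (insert ℓ B) p = minFlat F B p := by
  by_cases hp : ℓ p = 0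
  · rw [minFlat_insert_of_eq_zero hp, minFlat_inf_hyperplane, inf_eq_left.2 (h hp)]
  · rw [minFlat, filter_insert, if_neg hp, minFlat]

end Flat

section Cell

variable {E : Type*} [AddCommGroup E] [Module ℝ E] {F : AffineSubspace ℝ E}
  {B : Finset (E →ᵃ[ℝ] ℝ)} {ℓ : E →ᵃ[ℝ] ℝ} {p z : E}

/-- The relatively open cell of `F` on which all functionals in `B` are positive. -/
def openCell (F : AffineSubspace ℝ E) (B : Finset (E →ᵃ[ℝ] ℝ)) : Set E :=
  F ∩ ⋂ ℓ ∈ B, ℓ ⁻¹' Set.Ioi 0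

/-- The polyhedron in `F` on which all functionals in `B` are nonnegative. -/
def polyhedron (F : AffineSubspace ℝ E) (B : Finset (E →ᵃ[ℝ] ℝ)) : Set E :=
  F ∩ ⋂ ℓ ∈ B, ℓ ⁻¹' Set.Ici 0

lemma mem_openCell : z ∈ openCell F B ↔ z ∈ F ∧ ∀ ℓ ∈ B, 0 < ℓ z := by
  simp [openCell]

lemma mem_polyhedron : z ∈ polyhedron F B ↔ z ∈ F ∧ ∀ ℓ ∈ B, 0 ≤ ℓ z := by
  simp [polyhedron]

lemma openCell_subset_polyhedron : openCell F B ⊆ polyhedron F B := fun _ hz =>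
  mem_polyhedron.2 ⟨hz.1, fun ℓ hℓ => ((mem_openCell.1 hz).2 ℓ hℓ).le⟩

open scoped Classical in
lemma openCell_insert : openCell F (insert ℓ B) = openCell F B ∩ ℓ ⁻¹' Set.Ioi 0 := by
  rw [openCell, Finset.set_biInter_insert, openCell, Set.inter_assoc, Set.inter_comm (ℓ ⁻¹' _)]

open scoped Classical in
lemma openCell_insert_subset : openCell F (insert ℓ B) ⊆ openCell F B :=
  openCell_insert.trans_subset Set.inter_subset_left

open scoped Classical in
lemma polyhedron_insert : polyhedron F (insert ℓ B) = polyhedron F B ∩ ℓ ⁻¹' Set.Ici 0 := by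
  rw [polyhedron, Finset.set_biInter_insert, polyhedron, Set.inter_assoc,
    Set.inter_comm (ℓ ⁻¹' _)]

lemma mem_openCell_inf_hyperplane :
    z ∈ openCell (F ⊓ hyperplane ℓ) B ↔ z ∈ openCell F B ∧ ℓ z = 0 := by
  simp only [mem_openCell, AffineSubspace.mem_inf_iff, mem_hyperplane]; tauto

lemma mem_polyhedron_inf_hyperplane :
    z ∈ polyhedron (F ⊓ hyperplane ℓ) B ↔ z ∈ polyhedron F B ∧ ℓ z = 0 := by
  simp only [mem_polyhedron, AffineSubspace.mem_inf_iff, mem_hyperplane]; tauto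

lemma convex_openCell (F : AffineSubspace ℝ E) (B : Finset (E →ᵃ[ℝ] ℝ)) :
    Convex ℝ (openCell F B) :=
  F.convex.inter <| convex_iInter₂ fun ℓ _ => (convex_Ioi 0).affine_preimage ℓ

lemma convex_polyhedron (F : AffineSubspace ℝ E) (B : Finset (E →ᵃ[ℝ] ℝ)) :
    Convex ℝ (polyhedron F B) :=
  F.convex.inter <| convex_iInter₂ fun ℓ _ => (convex_Ici 0).affine_preimage ℓ

end Cell

section CellTopology

variable {E : Type*} [NormedAddCommGroup E] [NormedSpace ℝ E] {F : AffineSubspace ℝ E}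
  {B : Finset (E →ᵃ[ℝ] ℝ)} {ℓ : E →ᵃ[ℝ] ℝ} {p z : E}

lemma polyhedron_subset_closure_openCell (hne : (openCell F B).Nonempty) :
    polyhedron F B ⊆ closure (openCell F B) := by
  obtain ⟨c, hc⟩ := hne
  intro z hz
  have hsegment : openSegment ℝ c z ⊆ openCell F B := by
    rintro _ ⟨a, b, ha, hb, hab, rfl⟩
    refine mem_openCell.2 ⟨F.convex hc.1 hz.1 ha.le hb.le hab, fun ℓ hℓ => ?_⟩
    rw [Convex.combo_affine_apply hab, smul_eq_mul, smul_eq_mul]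
    exact add_pos_of_pos_of_nonneg (mul_pos ha ((mem_openCell.1 hc).2 ℓ hℓ))
      (mul_nonneg hb.le ((mem_polyhedron.1 hz).2 ℓ hℓ))
  exact closure_mono hsegment (segment_subset_closure_openSegment (right_mem_segment ℝ c z))

variable [FiniteDimensional ℝ E]

lemma isClosed_polyhedron (F : AffineSubspace ℝ E) (B : Finset (E →ᵃ[ℝ] ℝ)) :
    IsClosed (polyhedron F B) :=
  F.closed_of_finiteDimensional.inter <| isClosed_biInter fun ℓ _ =>
    isClosed_Ici.preimage ℓ.continuous_of_finiteDimensional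

lemma openCell_mem_nhdsWithin (hz : z ∈ openCell F B) : openCell F B ∈ nhdsWithin z F := by
  refine inter_mem_nhdsWithin _ ((Filter.biInter_finset_mem B).2 fun ℓ hℓ => ?_)
  exact (isOpen_Ioi.preimage ℓ.continuous_of_finiteDimensional).mem_nhds
    (show ℓ z ∈ Set.Ioi 0 from (mem_openCell.1 hz).2 ℓ hℓ)

lemma polyhedron_mem_nhdsWithin_minFlat (hp : p ∈ polyhedron F B) :
    polyhedron F B ∈ nhdsWithin p (minFlat F B p) := by
  have hcell : openCell F {ℓ ∈ B | ¬ ℓ p = 0} ∈ nhdsWithin p F :=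
    openCell_mem_nhdsWithin <| mem_openCell.2 ⟨hp.1, fun ℓ hℓ =>
      ((mem_polyhedron.1 hp).2 ℓ (mem_filter.1 hℓ).1).lt_of_ne' (mem_filter.1 hℓ).2⟩
  have hle : (minFlat F B p : Set E) ⊆ F := fun z hz => (mem_minFlat.1 hz).1
  filter_upwards [nhdsWithin_mono p hle hcell, self_mem_nhdsWithin] with z hz hzmin
  refine mem_polyhedron.2 ⟨hz.1, fun ℓ hℓ => ?_⟩
  by_cases h : ℓ p = 0
  · exact ((mem_minFlat.1 hzmin).2 ℓ hℓ h).ge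
  · exact ((mem_openCell.1 hz).2 ℓ (mem_filter.2 ⟨hℓ, h⟩)).le

open scoped Classical in
lemma openCell_insert_nonempty (hne : (openCell (F ⊓ hyperplane ℓ) B).Nonempty)
    (hz : z ∈ F) (hℓz : ℓ z ≠ 0) : (openCell F (insert ℓ B)).Nonempty := by
  obtain ⟨c, hc⟩ := hne
  obtain ⟨hcB, hcℓ⟩ := mem_openCell_inf_hyperplane.1 hc
  rw [openCell_insert]
  by_contra hempty
  have hle : ∀ w ∈ openCell F B, ℓ w ≤ 0 := fun w hw => not_lt.1 fun h => hempty ⟨w, hw, h⟩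
  have hmin : IsLocalMinOn (-ℓ) F c := by
    filter_upwards [openCell_mem_nhdsWithin hcB] with w hw
    simpa [hcℓ] using hle w hw
  exact hℓz (by simpa [hcℓ] using affineMap_eq_of_isLocalMinOn (-ℓ) hcB.1 hmin hz)

open scoped Classical in
lemma openCell_inf_hyperplane_nonempty (hpos : (openCell F (insert ℓ B)).Nonempty)
    (hneg : (openCell F (insert (-ℓ) B)).Nonempty) :
    (openCell (F ⊓ hyperplane ℓ) B).Nonempty := by
  rw [openCell_insert] at hpos hneg
  obtain ⟨⟨a, ha, hℓa⟩, b, hb, hℓb⟩ := hpos, hneg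
  obtain ⟨c, hc, hℓc⟩ := (convex_openCell F B).isPreconnected.intermediate_value hb ha
    ℓ.continuous_of_finiteDimensional.continuousOn
    (show (0 : ℝ) ∈ Set.Icc (ℓ b) (ℓ a) from ⟨(neg_pos.1 hℓb).le, le_of_lt hℓa⟩)
  exact ⟨c, mem_openCell_inf_hyperplane.2 ⟨hc, hℓc⟩⟩

end CellTopology

section Cut

variable {E : Type*} [NormedAddCommGroup E] [InnerProductSpace ℝ E]
  {F : AffineSubspace ℝ E} {B : Finset (E →ᵃ[ℝ] ℝ)} {ℓ : E →ᵃ[ℝ] ℝ} {x p z : E} {k : ℕ}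

/-- The open cell of `F` given by `B` is nonempty, and the point of its closure nearest to `x`
has a minimal flat of dimension `k`. -/
def ProjectsToDim (F : AffineSubspace ℝ E) (B : Finset (E →ᵃ[ℝ] ℝ)) (k : ℕ) (x : E) : Prop :=
  (openCell F B).Nonempty ∧
    ∃ p, IsNearest (polyhedron F B) x p ∧ affineDim (minFlat F B p) = k

lemma projectsToDim_iff (hne : (openCell F B).Nonempty) (hp : IsNearest (polyhedron F B) x p) :
    ProjectsToDim F B k x ↔ affineDim (minFlat F B p) = k := by
  refine ⟨?_, fun h => ⟨hne, p, hp, h⟩⟩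
  rintro ⟨-, q, hq, h⟩
  rwa [hp.unique (convex_polyhedron F B) hq]

open scoped Classical in
lemma projectsToDim_insert_iff (hp : IsNearest (polyhedron F B) x p) (hℓp : 0 ≤ ℓ p)
    (hgen : ℓ p = 0 → minFlat F B p ≤ hyperplane ℓ)
    (hne : (openCell F (insert ℓ B)).Nonempty) :
    ProjectsToDim F (insert ℓ B) k x ↔ ProjectsToDim F B k x := by
  have hp' : IsNearest (polyhedron F (insert ℓ B)) x p := by
    rw [polyhedron_insert]
    exact hp.mono Set.inter_subset_left ⟨hp.1, hℓp⟩
  rw [projectsToDim_iff hne hp', minFlat_insert hgen, projectsToDim_iff _ hp]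
  exact hne.mono openCell_insert_subset

variable [FiniteDimensional ℝ E]

lemma IsNearest.minFlat (hp : IsNearest (polyhedron F B) x p) : IsNearest (minFlat F B p) x p := by
  have hmem : p ∈ CharElts.minFlat F B p := self_mem_minFlat hp.1.1
  exact (hp.mono Set.inter_subset_left ⟨hp.1, hmem⟩).of_mem_nhdsWithin
    (AffineSubspace.convex _) hmem
    (Filter.inter_mem (polyhedron_mem_nhdsWithin_minFlat hp.1) self_mem_nhdsWithin)

lemma exists_isNearest_polyhedron (hne : (openCell F B).Nonempty) (x : E) :
    ∃ p, IsNearest (polyhedron F B) x p :=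
  exists_isNearest (convex_polyhedron F B) (isClosed_polyhedron F B)
    (hne.mono openCell_subset_polyhedron) x

open scoped Classical in
lemma IsNearest.apply_eq_zero_of_insert_neg (hp : IsNearest (polyhedron F B) x p) (hℓp : 0 ≤ ℓ p)
    (hz : IsNearest (polyhedron F (insert (-ℓ) B)) x z) : ℓ z = 0 := by
  rw [polyhedron_insert] at hz
  have hℓz : ℓ z ≤ 0 := neg_nonneg.1 hz.1.2
  by_contra hne
  have hnear : polyhedron F B ∩ (-ℓ) ⁻¹' Set.Ici 0 ∈ nhdsWithin z (polyhedron F B) := by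
    filter_upwards [self_mem_nhdsWithin, mem_nhdsWithin_of_mem_nhds
      ((isOpen_Iio.preimage ℓ.continuous_of_finiteDimensional).mem_nhds (hℓz.lt_of_ne hne))]
      with w hw hℓw
    exact ⟨hw, show 0 ≤ -ℓ w from neg_nonneg.2 (le_of_lt hℓw)⟩
  have hzp : z = p := (hz.of_mem_nhdsWithin (convex_polyhedron F B) hz.1.1 hnear).unique
    (convex_polyhedron F B) hp
  exact hne (le_antisymm hℓz (hzp ▸ hℓp))

open scoped Classical in
lemma projectsToDim_insert_neg_iff (hz : z ∈ F) (hℓz : ℓ z ≠ 0)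
    (hp : IsNearest (polyhedron F B) x p) (hℓp : 0 ≤ ℓ p)
    (hne : (openCell F (insert ℓ B)).Nonempty) :
    ProjectsToDim F (insert (-ℓ) B) k x ↔ ProjectsToDim (F ⊓ hyperplane ℓ) B k x := by
  by_cases hneg : (openCell F (insert (-ℓ) B)).Nonempty
  · obtain ⟨q, hq⟩ := exists_isNearest_polyhedron hneg x
    have hℓq : ℓ q = 0 := hp.apply_eq_zero_of_insert_neg hℓp hq
    have hq' : IsNearest (polyhedron (F ⊓ hyperplane ℓ) B) x q := by
      rw [polyhedron_insert] at hq
      refine hq.mono (fun w hw => ?_) (mem_polyhedron_inf_hyperplane.2 ⟨hq.1.1, hℓq⟩)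
      obtain ⟨hwB, hℓw⟩ := mem_polyhedron_inf_hyperplane.1 hw
      exact ⟨hwB, neg_nonneg.2 hℓw.le⟩
    rw [projectsToDim_iff hneg hq,
      projectsToDim_iff (openCell_inf_hyperplane_nonempty hne hneg) hq',
      minFlat_insert_of_eq_zero (neg_eq_zero.2 hℓq), hyperplane_neg]
  · refine iff_of_false (fun h => hneg h.1) fun h => hneg ?_
    exact openCell_insert_nonempty (hyperplane_neg ℓ ▸ h.1) hz (neg_ne_zero.2 hℓz)

open scoped Classical in
lemma projectsToDim_cut_of_nonneg (hz : z ∈ F) (hℓz : ℓ z ≠ 0) (hcell : (openCell F B).Nonempty)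
    (hp : IsNearest (polyhedron F B) x p) (hgen : ℓ p = 0 → minFlat F B p ≤ hyperplane ℓ)
    (hℓp : 0 ≤ ℓ p) :
    ((if ProjectsToDim F (insert (-ℓ) B) k x then 1 else 0) +
        if ProjectsToDim F (insert ℓ B) k x then 1 else 0 : ℕ) =
      (if ProjectsToDim F B k x then 1 else 0) +
        if ProjectsToDim (F ⊓ hyperplane ℓ) B k x then 1 else 0 := by
  by_cases hne : (openCell F (insert ℓ B)).Nonempty
  · simp only [projectsToDim_insert_iff hp hℓp hgen hne,
      projectsToDim_insert_neg_iff hz hℓz hp hℓp hne]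
    exact add_comm _ _
  · have hempty : ¬ (openCell (F ⊓ hyperplane ℓ) B).Nonempty := fun h =>
      hne (openCell_insert_nonempty h hz hℓz)
    have hnonpos : ∀ w ∈ openCell F B, ℓ w ≤ 0 := fun w hw => not_lt.1 fun h =>
      hne ⟨w, openCell_insert.superset ⟨hw, h⟩⟩
    have hℓp' : ℓ p ≤ 0 := closure_minimal hnonpos
      (isClosed_Iic.preimage ℓ.continuous_of_finiteDimensional)
      (polyhedron_subset_closure_openCell hcell hp.1)
    have hneg : (openCell F (insert (-ℓ) B)).Nonempty := by
      obtain ⟨c, hc⟩ := hcell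
      rw [openCell_insert]
      exact ⟨c, hc, neg_pos.2 <| (hnonpos c hc).lt_of_ne fun h =>
        hempty ⟨c, mem_openCell_inf_hyperplane.2 ⟨hc, h⟩⟩⟩
    have hiff : ProjectsToDim F (insert (-ℓ) B) k x ↔ ProjectsToDim F B k x :=
      projectsToDim_insert_iff hp (neg_nonneg.2 hℓp')
        (fun _ => hyperplane_neg ℓ ▸ hgen (le_antisymm hℓp' hℓp)) hneg
    simp only [hiff, if_neg fun h : ProjectsToDim F (insert ℓ B) k x => hne h.1,
      if_neg fun h : ProjectsToDim (F ⊓ hyperplane ℓ) B k x => hempty h.1]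

open scoped Classical in
lemma projectsToDim_cut (hz : z ∈ F) (hℓz : ℓ z ≠ 0)
    (hgen : ∀ p, IsNearest (polyhedron F B) x p → ℓ p = 0 → minFlat F B p ≤ hyperplane ℓ) :
    ((if ProjectsToDim F (insert (-ℓ) B) k x then 1 else 0) +
        if ProjectsToDim F (insert ℓ B) k x then 1 else 0 : ℕ) =
      (if ProjectsToDim F B k x then 1 else 0) +
        if ProjectsToDim (F ⊓ hyperplane ℓ) B k x then 1 else 0 := by
  by_cases hcell : (openCell F B).Nonempty
  · obtain ⟨p, hp⟩ := exists_isNearest_polyhedron hcell x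
    rcases le_total 0 (ℓ p) with hℓp | hℓp
    · exact projectsToDim_cut_of_nonneg hz hℓz hcell hp (hgen p hp) hℓp
    · rw [add_comm]
      simpa only [neg_neg, hyperplane_neg] using
        projectsToDim_cut_of_nonneg (ℓ := -ℓ) hz (neg_ne_zero.2 hℓz) hcell hp
          (fun h => hyperplane_neg ℓ ▸ hgen p hp (neg_eq_zero.1 h)) (neg_nonneg.2 hℓp)
  · have hsub : ∀ ℓ' : E →ᵃ[ℝ] ℝ, ¬ ProjectsToDim F (insert ℓ' B) k x := fun ℓ' h =>
      hcell (h.1.mono openCell_insert_subset)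
    have hinf : ¬ ProjectsToDim (F ⊓ hyperplane ℓ) B k x := fun h =>
      hcell (h.1.mono fun w hw => (mem_openCell_inf_hyperplane.1 hw).1)
    have hself : ¬ ProjectsToDim F B k x := fun h => hcell h.1
    simp only [hsub, hinf, hself]

end Cut

section Reorient

variable {E : Type*} [AddCommGroup E] [Module ℝ E] {F : AffineSubspace ℝ E}
  {A T : Finset (E →ᵃ[ℝ] ℝ)} {ℓ : E →ᵃ[ℝ] ℝ} {p : E}

open scoped Classical in
/-- The functionals of `A`, with those outside `T` negated: as `T` runs over the subsets of `A`,
the nonempty open cells of `reorient A T` are the chambers of the arrangement `A`. -/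
def reorient (A T : Finset (E →ᵃ[ℝ] ℝ)) : Finset (E →ᵃ[ℝ] ℝ) :=
  A.image fun ℓ => if ℓ ∈ T then ℓ else -ℓ

@[simp] lemma reorient_empty (T : Finset (E →ᵃ[ℝ] ℝ)) : reorient ∅ T = ∅ := by
  simp [reorient]

open scoped Classical in
lemma mem_openCell_reorient :
    p ∈ openCell F (reorient A T) ↔ p ∈ F ∧ ∀ ℓ ∈ A, if ℓ ∈ T then 0 < ℓ p else ℓ p < 0 := by
  simp only [mem_openCell, reorient, forall_mem_image]
  refine and_congr_right fun _ => forall₂_congr fun ℓ _ => ?_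
  split_ifs <;> simp

open scoped Classical in
lemma reorient_insert_of_notMem (hℓ : ℓ ∉ T) :
    reorient (insert ℓ A) T = insert (-ℓ) (reorient A T) := by
  rw [reorient, image_insert, if_neg hℓ, reorient]

open scoped Classical in
lemma reorient_insert_insert (hℓ : ℓ ∉ A) :
    reorient (insert ℓ A) (insert ℓ T) = insert ℓ (reorient A T) := by
  rw [reorient, image_insert, if_pos (mem_insert_self ℓ T), reorient]
  congr 1
  refine image_congr fun ℓ' hℓ' => ?_
  simp only [mem_insert, ne_of_mem_of_not_mem hℓ' hℓ, false_or]

lemma minFlat_reorient (F : AffineSubspace ℝ E) (A T : Finset (E →ᵃ[ℝ] ℝ)) (p : E) :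
    minFlat F (reorient A T) p = minFlat F A p := by
  ext z
  simp only [mem_minFlat, reorient, forall_mem_image]
  refine and_congr_right fun _ => forall₂_congr fun ℓ _ => ?_
  split_ifs <;> simp

end Reorient

section WhitneySum

variable {E : Type*} [AddCommGroup E] [Module ℝ E] {F : AffineSubspace ℝ E}
  {A : Finset (E →ᵃ[ℝ] ℝ)} {ℓ : E →ᵃ[ℝ] ℝ}

open scoped Classical in
/-- Whitney's expansion of the coefficient attached to the `k`-dimensional flats of the
arrangement induced by `A` on `F`. -/
def whitneySum (F : AffineSubspace ℝ E) (A : Finset (E →ᵃ[ℝ] ℝ)) (k : ℕ) : ℤ :=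
  ∑ S ∈ A.powerset with (flat F S : Set E).Nonempty ∧ affineDim (flat F S) = k,
    (-1) ^ #S

open scoped Classical in
lemma whitneySum_insert (hℓ : ℓ ∉ A) (F : AffineSubspace ℝ E) (k : ℕ) :
    whitneySum F (insert ℓ A) k = whitneySum F A k - whitneySum (F ⊓ hyperplane ℓ) A k := by
  simp only [whitneySum, sum_filter, sum_powerset_insert hℓ, flat_insert, sub_eq_add_neg,
    ← sum_neg_distrib]
  congr 1
  refine sum_congr rfl fun S hS => ?_
  rw [card_insert_of_notMem fun h => hℓ (mem_powerset.1 hS h), pow_succ, mul_neg_one,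
    apply_ite Neg.neg, neg_zero]

lemma whitneySum_bot (A : Finset (E →ᵃ[ℝ] ℝ)) (k : ℕ) :
    whitneySum (⊥ : AffineSubspace ℝ E) A k = 0 := by
  simp [whitneySum, flat]

end WhitneySum

section CellCount

variable {E : Type*} [NormedAddCommGroup E] [InnerProductSpace ℝ E] {F : AffineSubspace ℝ E}
  {A S T : Finset (E →ᵃ[ℝ] ℝ)} {ℓ : E →ᵃ[ℝ] ℝ} {x p z : E} {k : ℕ}

/-- `x` is generic if its nearest point on a flat lies on no hyperplane that does not contain the
whole flat. -/
def IsGeneric (F : AffineSubspace ℝ E) (A : Finset (E →ᵃ[ℝ] ℝ)) (x : E) : Prop :=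
  ∀ S ⊆ A, ∀ ℓ ∈ A, ∀ p, IsNearest (flat F S) x p → ℓ p = 0 → flat F S ≤ hyperplane ℓ

open scoped Classical in
lemma IsGeneric.of_insert (h : IsGeneric F (insert ℓ A) x) : IsGeneric F A x :=
  fun S hS ℓ' hℓ' => h S (hS.trans (subset_insert ℓ A)) ℓ' (mem_insert_of_mem hℓ')

open scoped Classical in
lemma IsGeneric.inf_hyperplane (h : IsGeneric F (insert ℓ A) x) :
    IsGeneric (F ⊓ hyperplane ℓ) A x := fun S hS ℓ' hℓ' => by
  rw [← flat_insert]
  exact h (insert ℓ S) (insert_subset_insert ℓ hS) ℓ' (mem_insert_of_mem hℓ')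

open scoped Classical in
/-- The number of chambers of the arrangement induced by `A` on `F` whose point nearest to `x` has
a minimal flat of dimension `k`. -/
def cellCount (F : AffineSubspace ℝ E) (A : Finset (E →ᵃ[ℝ] ℝ)) (k : ℕ) (x : E) : ℕ :=
  #{T ∈ A.powerset | ProjectsToDim F (reorient A T) k x}

open scoped Classical in
lemma cellCount_eq_zero (h : ∀ T ⊆ A, ¬ (openCell F (reorient A T)).Nonempty) :
    cellCount F A k x = 0 :=
  card_eq_zero.2 <| filter_eq_empty_iff.2 fun T hT hproj => h T (mem_powerset.1 hT) hproj.1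

lemma cellCount_bot (A : Finset (E →ᵃ[ℝ] ℝ)) (k : ℕ) (x : E) :
    cellCount (⊥ : AffineSubspace ℝ E) A k x = 0 :=
  cellCount_eq_zero fun _ _ h => h.ne_empty (by simp [openCell])

open scoped Classical in
lemma cellCount_insert_eq_zero (hF : F ≤ hyperplane ℓ) : cellCount F (insert ℓ A) k x = 0 := by
  refine cellCount_eq_zero fun T _ ⟨c, hc⟩ => ?_
  rw [mem_openCell_reorient] at hc
  have := hc.2 ℓ (mem_insert_self ℓ A)
  rw [mem_hyperplane.1 (hF hc.1)] at this
  split_ifs at this <;> exact lt_irrefl _ this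

variable [FiniteDimensional ℝ E]

open scoped Classical in
lemma cellCount_insert (hℓ : ℓ ∉ A) (hz : z ∈ F) (hℓz : ℓ z ≠ 0)
    (hx : IsGeneric F (insert ℓ A) x) :
    cellCount F (insert ℓ A) k x = cellCount F A k x + cellCount (F ⊓ hyperplane ℓ) A k x := by
  simp only [cellCount, card_filter, sum_powerset_insert hℓ, ← sum_add_distrib]
  refine sum_congr rfl fun T hT => ?_
  have hℓT : ℓ ∉ T := fun h => hℓ (mem_powerset.1 hT h)
  rw [reorient_insert_of_notMem hℓT, reorient_insert_insert hℓ]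
  refine projectsToDim_cut hz hℓz fun p hp => ?_
  have hp' := hp.minFlat
  rw [minFlat_reorient] at hp' ⊢
  exact hx _ ((filter_subset _ A).trans (subset_insert ℓ A)) ℓ (mem_insert_self ℓ A) p hp'

lemma cellCount_empty (hF : (F : Set E).Nonempty) :
    cellCount F ∅ k x = if affineDim F = k then 1 else 0 := by
  classical
  have hne : (openCell F ∅).Nonempty := by simpa [openCell] using hF
  obtain ⟨p, hp⟩ := exists_isNearest_polyhedron hne x
  simp [cellCount, projectsToDim_iff hne hp, minFlat, apply_ite card]

open scoped Classical in
theorem whitneySum_eq_cellCount (hx : IsGeneric F A x) (k : ℕ) :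
    whitneySum F A k = (-1) ^ (affineDim F + k) * cellCount F A k x := by
  induction A using Finset.induction_on generalizing F with
  | empty =>
    rcases F.eq_bot_or_nonempty with rfl | hF
    · rw [whitneySum_bot, cellCount_bot, Nat.cast_zero, mul_zero]
    · rw [cellCount_empty hF]
      by_cases hk : affineDim F = k
      · simp [whitneySum, filter_singleton, hF, hk, Even.neg_one_pow ⟨k, rfl⟩]
      · simp [whitneySum, filter_singleton, hk]
  | insert ℓ A hℓ ih =>
    rw [whitneySum_insert hℓ]
    by_cases hF : F ≤ hyperplane ℓ
    · rw [inf_eq_left.2 hF, sub_self, cellCount_insert_eq_zero hF, Nat.cast_zero, mul_zero]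
    obtain ⟨z, hz, hzℓ⟩ := SetLike.not_le_iff_exists.1 hF
    have hℓz : ℓ z ≠ 0 := mt mem_hyperplane.2 hzℓ
    rw [cellCount_insert hℓ hz hℓz hx, ih hx.of_insert]
    rcases (F ⊓ hyperplane ℓ).eq_bot_or_nonempty with hbot | ⟨p, hp⟩
    · rw [hbot, whitneySum_bot, cellCount_bot, sub_zero, add_zero]
    · rw [ih hx.inf_hyperplane, ← affineDim_inf_hyperplane hp hz hℓz]
      push_cast
      ring

end CellCount

section Generic

variable {E : Type*} [NormedAddCommGroup E] [InnerProductSpace ℝ E] [FiniteDimensional ℝ E]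

lemma IsNearest.coe_orthogonalProjection_eq {G : AffineSubspace ℝ E} [Nonempty G] {x p : E}
    (hp : IsNearest (G : Set E) x p) : (EuclideanGeometry.orthogonalProjection G x : E) = p :=
  IsNearest.unique G.convex ⟨EuclideanGeometry.orthogonalProjection_mem x, fun z hz => by
    rw [EuclideanGeometry.dist_orthogonalProjection_eq_infDist]
    exact Metric.infDist_le_dist_of_mem hz⟩ hp

variable [MeasurableSpace E] [BorelSpace E]

lemma ae_hyperplane_of_isNearest (μ : Measure E) [μ.IsAddHaarMeasure] (G : AffineSubspace ℝ E)
    (ℓ : E →ᵃ[ℝ] ℝ) :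
    ∀ᵐ x ∂μ, ∀ p, IsNearest (G : Set E) x p → ℓ p = 0 → G ≤ hyperplane ℓ := by
  by_cases hG : G ≤ hyperplane ℓ
  · exact Filter.Eventually.of_forall fun _ _ _ _ => hG
  obtain ⟨z, hz, hℓz⟩ := SetLike.not_le_iff_exists.1 hG
  have : Nonempty G := ⟨⟨z, hz⟩⟩
  let h : E →ᵃ[ℝ] ℝ := ℓ.comp (G.subtype.comp
    (EuclideanGeometry.orthogonalProjection G : E →ᵃ[ℝ] G))
  have hval : ∀ x, h x = ℓ (EuclideanGeometry.orthogonalProjection G x) := fun _ => rfl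
  have hne : hyperplane h ≠ ⊤ := fun htop => hℓz <| mem_hyperplane.2 <| by
    have hhz : z ∈ hyperplane h := htop ▸ AffineSubspace.mem_top ℝ E z
    rwa [mem_hyperplane, hval, EuclideanGeometry.orthogonalProjection_eq_self_iff.2 hz] at hhz
  filter_upwards [measure_eq_zero_iff_ae_notMem.1 (Measure.addHaar_affineSubspace μ _ hne)]
    with x hx p hp hℓp
  refine absurd ?_ hx
  rw [SetLike.mem_coe, mem_hyperplane, hval, hp.coe_orthogonalProjection_eq, hℓp]

lemma ae_isGeneric (μ : Measure E) [μ.IsAddHaarMeasure] (F : AffineSubspace ℝ E)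
    (A : Finset (E →ᵃ[ℝ] ℝ)) : ∀ᵐ x ∂μ, IsGeneric F A x := by
  have h : ∀ᵐ x ∂μ, ∀ S ∈ A.powerset, ∀ ℓ ∈ A, ∀ p,
      IsNearest (flat F S : Set E) x p → ℓ p = 0 → flat F S ≤ hyperplane ℓ :=
    (Filter.eventually_all_finset _).2 fun S _ => (Filter.eventually_all_finset _).2 fun ℓ _ =>
      ae_hyperplane_of_isNearest μ (flat F S) ℓ
  filter_upwards [h] with x hx S hS using hx S (mem_powerset.2 hS)

end Generic

section RelativeInterior

variable {E : Type*} [NormedAddCommGroup E] [NormedSpace ℝ E] {G : AffineSubspace ℝ E} {Q : Set E}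
  {p : E}

lemma mem_intrinsicInterior_iff_mem_nhdsWithin :
    p ∈ intrinsicInterior ℝ Q ↔ p ∈ Q ∧ Q ∈ nhdsWithin p (affineSpan ℝ Q) := by
  constructor
  · intro hp
    obtain ⟨y, hy, rfl⟩ := mem_intrinsicInterior.1 hp
    exact ⟨intrinsicInterior_subset hp,
      preimage_coe_mem_nhds_subtype.1 (mem_interior_iff_mem_nhds.1 hy)⟩
  · rintro ⟨hp, hQ⟩
    exact mem_intrinsicInterior.2 ⟨⟨p, subset_affineSpan ℝ Q hp⟩,
      mem_interior_iff_mem_nhds.2 (preimage_coe_mem_nhds_subtype.2 hQ), rfl⟩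

lemma affineSpan_eq_of_mem_nhdsWithin (hp : p ∈ G) (hQG : Q ⊆ G) (hQ : Q ∈ nhdsWithin p G) :
    affineSpan ℝ Q = G := by
  refine le_antisymm (affineSpan_le.2 hQG) fun z hz => ?_
  have htends : Filter.Tendsto (AffineMap.lineMap p z : ℝ → E) (nhdsWithin 0 {0}ᶜ)
      (nhdsWithin p G) := by
    refine tendsto_nhdsWithin_iff.2 ⟨?_, .of_forall fun t => AffineMap.lineMap_mem t hp hz⟩
    have := (AffineMap.lineMap_continuous (p := p) (q := z) (R := ℝ)).tendsto 0
    rw [AffineMap.lineMap_apply_zero] at this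
    exact this.mono_left nhdsWithin_le_nhds
  obtain ⟨t, htQ, ht⟩ := ((htends.eventually_mem hQ).and self_mem_nhdsWithin).exists
  have hz_eq : AffineMap.lineMap p (AffineMap.lineMap p z t) t⁻¹ = z := by
    simp [AffineMap.lineMap_lineMap_right, inv_mul_cancel₀ (show t ≠ 0 from ht)]
  rw [← hz_eq]
  exact AffineMap.lineMap_mem _ (subset_affineSpan ℝ Q (mem_of_mem_nhdsWithin hp hQ))
    (subset_affineSpan ℝ Q htQ)

end RelativeInterior

section PolyFace

variable {F : AffineSubspace ℝ (V n)} {B : Finset (AffForm n)} {p : V n} {P Q : Set (V n)}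

lemma IsPolyFace.subset (hQ : IsPolyFace P Q) : Q ⊆ P := by
  rcases hQ with rfl | ⟨_, φ, _, rfl⟩
  exacts [subset_rfl, Set.sep_subset _ _]

lemma IsPolyFace.mem_nhdsWithin_minFlat (hQ : IsPolyFace (polyhedron F B) Q) (hp : p ∈ Q) :
    Q ∈ nhdsWithin p (minFlat F B p) := by
  have hpoly := polyhedron_mem_nhdsWithin_minFlat (hQ.subset hp)
  rcases hQ with rfl | ⟨_, φ, hbdd, rfl⟩
  · exact hpoly
  obtain ⟨hpP, hφp⟩ := hp
  have hmin : IsLocalMinOn (-φ.toAffineMap) (minFlat F B p) p := by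
    filter_upwards [hpoly] with z hz
    exact neg_le_neg (hφp ▸ le_csSup hbdd (Set.mem_image_of_mem φ hz))
  filter_upwards [hpoly, self_mem_nhdsWithin] with z hzP hz
  exact ⟨hzP, hφp ▸ neg_injective
    (affineMap_eq_of_isLocalMinOn _ (self_mem_minFlat hpP.1) hmin hz)⟩

lemma subset_minFlat_of_mem_intrinsicInterior (hQ : Q ⊆ polyhedron F B)
    (hp : p ∈ intrinsicInterior ℝ Q) : Q ⊆ minFlat F B p := by
  obtain ⟨hpQ, hnhds⟩ := mem_intrinsicInterior_iff_mem_nhdsWithin.1 hp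
  refine fun z hz => mem_minFlat.2 ⟨(hQ hz).1, fun ℓ hℓ hℓp => ?_⟩
  have hmin : IsLocalMinOn ℓ (affineSpan ℝ Q) p := by
    filter_upwards [hnhds] with w hw
    exact hℓp ▸ (mem_polyhedron.1 (hQ hw)).2 ℓ hℓ
  rw [affineMap_eq_of_isLocalMinOn ℓ (subset_affineSpan ℝ Q hpQ) hmin
    (subset_affineSpan ℝ Q hz), hℓp]

lemma IsPolyFace.affineSpan_eq_minFlat (hQ : IsPolyFace (polyhedron F B) Q) (hp : p ∈ Q)
    (hle : Q ⊆ minFlat F B p) : affineSpan ℝ Q = minFlat F B p :=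
  affineSpan_eq_of_mem_nhdsWithin (hle hp) hle (hQ.mem_nhdsWithin_minFlat hp)

lemma isPolyFace_polyhedron_inter_minFlat (hp : p ∈ polyhedron F B) :
    IsPolyFace (polyhedron F B) (polyhedron F B ∩ minFlat F B p) := by
  let φ : V n →ₗ[ℝ] ℝ := -∑ ℓ ∈ B with ℓ p = 0, ℓ.linear
  have hφ : ∀ z, φ z = φ p - ∑ ℓ ∈ B with ℓ p = 0, ℓ z := fun z => by
    have hlin : ∀ ℓ ∈ B.filter (· p = 0), ℓ.linear (z - p) = ℓ z := fun ℓ hℓ => by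
      rw [← vsub_eq_sub, AffineMap.linearMap_vsub, (mem_filter.1 hℓ).2, vsub_eq_sub, sub_zero]
    have hsub : φ (z - p) = -∑ ℓ ∈ B with ℓ p = 0, ℓ.linear (z - p) := by simp [φ]
    rw [sum_congr rfl hlin, map_sub] at hsub
    linarith
  have hnonneg : ∀ z ∈ polyhedron F B, ∀ ℓ ∈ B.filter (· p = 0), 0 ≤ ℓ z := fun z hz ℓ hℓ =>
    (mem_polyhedron.1 hz).2 ℓ (mem_filter.1 hℓ).1
  have hgreatest : IsGreatest (φ '' polyhedron F B) (φ p) := by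
    refine ⟨Set.mem_image_of_mem φ hp, Set.forall_mem_image.2 fun z hz => ?_⟩
    rw [hφ z]
    exact sub_le_self _ (sum_nonneg (hnonneg z hz))
  refine .inr ⟨⟨p, hp, self_mem_minFlat hp.1⟩, φ, hgreatest.bddAbove, ?_⟩
  ext z
  refine and_congr_right fun hz => ?_
  rw [hgreatest.csSup_eq, hφ z, sub_eq_self, sum_eq_zero_iff_of_nonneg (hnonneg z hz),
    SetLike.mem_coe, mem_minFlat, and_iff_right (mem_polyhedron.1 hz).1]
  simp only [mem_filter, and_imp]

lemma mem_projSet_polyhedron {k : ℕ} {x : V n} :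
    x ∈ projSet (polyhedron F B) k ↔
      ∃ p, IsNearest (polyhedron F B) x p ∧ affineDim (minFlat F B p) = k := by
  have hdim : ∀ {p Q}, affineSpan ℝ Q = minFlat F B p → dimS Q = affineDim (minFlat F B p) :=
    fun h => by rw [affineDim, ← h, direction_affineSpan, dimS]
  constructor
  · rintro ⟨p, hp, Q, hQ, rfl, hpQ⟩
    exact ⟨p, hp, (hdim (hQ.affineSpan_eq_minFlat (intrinsicInterior_subset hpQ)
      (subset_minFlat_of_mem_intrinsicInterior hQ.subset hpQ))).symm⟩
  · rintro ⟨p, hp, rfl⟩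
    have hQ := isPolyFace_polyhedron_inter_minFlat hp.1
    have hpQ : p ∈ polyhedron F B ∩ minFlat F B p := ⟨hp.1, self_mem_minFlat hp.1.1⟩
    have hspan := hQ.affineSpan_eq_minFlat hpQ Set.inter_subset_right
    refine ⟨p, hp, _, hQ, hdim hspan, mem_intrinsicInterior_iff_mem_nhdsWithin.2 ⟨hpQ, ?_⟩⟩
    rw [hspan]
    exact hQ.mem_nhdsWithin_minFlat hpQ

end PolyFace

section Measurability

lemma measurableSet_minFlat {E : Type*} [NormedAddCommGroup E] [NormedSpace ℝ E]
    [FiniteDimensional ℝ E] [MeasurableSpace E] [BorelSpace E] (F : AffineSubspace ℝ E)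
    (B : Finset (E →ᵃ[ℝ] ℝ)) (s : Set (AffineSubspace ℝ E)) :
    MeasurableSet {p | minFlat F B p ∈ s} := by
  classical
  have hzero : ∀ S ⊆ B, MeasurableSet {p : E | B.filter (· p = 0) = S} := fun S hS => by
    have : {p : E | B.filter (· p = 0) = S} = ⋂ ℓ ∈ B, {p | ℓ p = 0 ↔ ℓ ∈ S} := by
      ext p
      simp only [Finset.ext_iff, mem_filter, Set.mem_iInter, Set.mem_ofPred_eq]
      exact ⟨fun h ℓ hℓ => by simpa [hℓ] using h ℓ, fun h ℓ =>
        ⟨fun hℓ => (h ℓ hℓ.1).1 hℓ.2, fun hℓ => ⟨hS hℓ, (h ℓ (hS hℓ)).2 hℓ⟩⟩⟩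
    rw [this]
    exact Finset.measurableSet_biInter B fun ℓ _ =>
      (isClosed_eq ℓ.continuous_of_finiteDimensional continuous_const).measurableSet.iff (.const _)
  have hunion : {p | minFlat F B p ∈ s} =
      ⋃ S ∈ B.powerset.filter (flat F · ∈ s), {p : E | B.filter (· p = 0) = S} := by
    ext p
    simp [minFlat]
  rw [hunion]
  exact Finset.measurableSet_biUnion _ fun S hS => hzero S (mem_powerset.1 (mem_filter.1 hS).1)

lemma measurableSet_projSet_polyhedron (F : AffineSubspace ℝ (V n)) (B : Finset (AffForm n))
    (k : ℕ) : MeasurableSet (projSet (polyhedron F B) k) := by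
  rcases (polyhedron F B).eq_empty_or_nonempty with hempty | hne
  · have : projSet (polyhedron F B) k = ∅ :=
      Set.eq_empty_of_forall_notMem fun x ⟨p, hp, _⟩ => hempty.subset hp.1
    exact this ▸ .empty
  have hconv := convex_polyhedron F B
  choose f hf using exists_isNearest hconv (isClosed_polyhedron F B) hne
  have hlip : LipschitzWith 1 f := .mk_one fun x y => (hf x).dist_le hconv (hf y)
  have : projSet (polyhedron F B) k = f ⁻¹' {p | minFlat F B p ∈ {G | affineDim G = k}} := by
    ext x
    rw [mem_projSet_polyhedron]
    refine ⟨fun ⟨p, hp, h⟩ => ?_, fun h => ⟨f x, hf x, h⟩⟩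
    obtain rfl := hp.unique hconv (hf x)
    exact h
  rw [this]
  exact hlip.continuous.measurable (measurableSet_minFlat F B _)

end Measurability

section Chamber

variable {A T : Finset (AffForm n)} {C : Face A}

open scoped Classical in
/-- The functionals of `A` that are positive on the face `C`. -/
def Face.positive (C : Face A) : Finset (AffForm n) := {ℓ ∈ A | ∃ h, C.sgn ⟨ℓ, h⟩ = 1}

lemma Face.mem_positive (ℓ : Idx A) : ℓ.1 ∈ C.positive ↔ C.sgn ℓ = 1 := by
  simp [positive, ℓ.2]

open scoped Classical in
lemma IsChamber.sgn_eq (hC : IsChamber A C) :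
    C.sgn = fun ℓ => if ℓ.1 ∈ C.positive then 1 else -1 := by
  funext ℓ
  rcases hs : C.sgn ℓ with _ | _ | _
  · exact absurd hs (hC ℓ)
  all_goals simp only [Face.mem_positive, hs]; rfl

open scoped Classical in
lemma faceSet_ite_eq_openCell (A T : Finset (AffForm n)) :
    faceSet A (fun ℓ => if ℓ.1 ∈ T then 1 else -1) = openCell ⊤ (reorient A T) := by
  ext x
  rw [mem_openCell_reorient, faceSet, Set.mem_ofPred_eq, Subtype.forall]
  refine Iff.trans ?_ (and_iff_right (AffineSubspace.mem_top ℝ _ x)).symm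
  refine forall₂_congr fun ℓ _ => ?_
  split_ifs
  exacts [sign_eq_one_iff, sign_eq_neg_one_iff]

lemma IsChamber.carrier_eq_openCell (hC : IsChamber A C) :
    C.carrier = openCell ⊤ (reorient A C.positive) := by
  classical
  rw [Face.carrier, ← faceSet_ite_eq_openCell, ← hC.sgn_eq]

lemma IsChamber.closure_carrier (hC : IsChamber A C) :
    closure C.carrier = polyhedron ⊤ (reorient A C.positive) := by
  rw [hC.carrier_eq_openCell]
  refine (closure_minimal openCell_subset_polyhedron (isClosed_polyhedron _ _)).antisymm
    (polyhedron_subset_closure_openCell ?_)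
  rw [← hC.carrier_eq_openCell]
  exact C.nonempty

lemma exists_isChamber_positive_eq (hT : T ⊆ A) (hne : (openCell ⊤ (reorient A T)).Nonempty) :
    ∃ C : Face A, IsChamber A C ∧ C.positive = T := by
  classical
  rw [← faceSet_ite_eq_openCell] at hne
  refine ⟨⟨_, hne⟩, fun ℓ => ?_, ?_⟩
  · change (if ℓ.1 ∈ T then (1 : SignType) else -1) ≠ 0
    split_ifs <;> decide
  · ext ℓ
    have hmem : ℓ ∈ T → ℓ ∈ A := fun h => hT h
    by_cases hℓ : ℓ ∈ T <;> simp [Face.positive, hℓ, hmem]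

lemma IsChamber.mem_projSet_iff_projectsToDim (hC : IsChamber A C) {k : ℕ} {x : V n} :
    x ∈ projSet (closure C.carrier) k ↔ ProjectsToDim ⊤ (reorient A C.positive) k x := by
  rw [hC.closure_carrier, mem_projSet_polyhedron, ProjectsToDim, ← hC.carrier_eq_openCell]
  exact (and_iff_right C.nonempty).symm

open scoped Classical in
lemma card_isChamber_mem_projSet (A : Finset (AffForm n)) (k : ℕ) (x : V n) :
    #{C : Face A | IsChamber A C ∧ x ∈ projSet (closure C.carrier) k} = cellCount ⊤ A k x := by
  refine card_bij (fun C _ => C.positive) ?_ ?_ ?_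
  · intro C hC
    obtain ⟨hC, hx⟩ := (mem_filter.1 hC).2
    exact mem_filter.2 ⟨mem_powerset.2 (filter_subset _ A), hC.mem_projSet_iff_projectsToDim.1 hx⟩
  · intro C hC D hD h
    ext1
    rw [(mem_filter.1 hC).2.1.sgn_eq, (mem_filter.1 hD).2.1.sgn_eq, h]
  · intro T hT
    obtain ⟨hTA, hproj⟩ := mem_filter.1 hT
    obtain ⟨C, hC, rfl⟩ := exists_isChamber_positive_eq (mem_powerset.1 hTA) hproj.1
    exact ⟨C, mem_filter.2 ⟨mem_univ C, hC, hC.mem_projSet_iff_projectsToDim.2 hproj⟩, rfl⟩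

end Chamber

section IntrinsicVolumes

open scoped Classical in
lemma sum_measureReal_eq_of_ae_card_eq {ι α : Type*} [MeasurableSpace α] {ν : Measure α}
    [IsFiniteMeasure ν] {I : Finset ι} {s : ι → Set α} {c : ℝ}
    (hs : ∀ i ∈ I, MeasurableSet (s i)) (hcard : ∀ᵐ x ∂ν, (#{i ∈ I | x ∈ s i} : ℝ) = c) :
    ∑ i ∈ I, ν.real (s i) = c * ν.real Set.univ := calc
  ∑ i ∈ I, ν.real (s i) = ∑ i ∈ I, ∫ x, (s i).indicator 1 x ∂ν :=
    sum_congr rfl fun i hi => (integral_indicator_one (hs i hi)).symm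
  _ = ∫ x, ∑ i ∈ I, (s i).indicator 1 x ∂ν :=
    (integral_finsetSum I fun i hi => (integrable_const 1).indicator (hs i hi)).symm
  _ = ∫ _, c ∂ν := integral_congr_ae <| by
    filter_upwards [hcard] with x hx
    simp [← hx, Set.indicator_apply]
  _ = c * ν.real Set.univ := by rw [integral_const, smul_eq_mul, mul_comm]

lemma affineDim_top : affineDim (⊤ : AffineSubspace ℝ (V n)) = n := by
  rw [affineDim, AffineSubspace.direction_top, finrank_top, finrank_euclideanSpace_fin]

open scoped Classical in
lemma ae_card_isChamber_mem_projSet (A : Finset (AffForm n)) (k : ℕ) :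
    ∀ᵐ x : V n, (#{C ∈ univ.filter (IsChamber A) | x ∈ projSet (closure C.carrier) k} : ℝ) =
      (-1) ^ (n + k) * whitneySum ⊤ A k := by
  filter_upwards [ae_isGeneric volume ⊤ A] with x hx
  rw [filter_filter, card_isChamber_mem_projSet, whitneySum_eq_cellCount hx, affineDim_top]
  push_cast
  rw [← mul_assoc, ← mul_pow, neg_one_mul, neg_neg, one_pow, one_mul]

open scoped Classical in
lemma sum_volume_projSet_inter_ball (A : Finset (AffForm n)) (k : ℕ) (R : ℝ) :
    ∑ C with IsChamber A C,
        volume.real (projSet (closure C.carrier) k ∩ Metric.ball (0 : V n) R) =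
      (-1) ^ (n + k) * whitneySum ⊤ A k * volume.real (Metric.ball (0 : V n) R) := by
  have hmeas : ∀ C ∈ univ.filter (IsChamber A), MeasurableSet (projSet (closure C.carrier) k) :=
    fun C hC => (mem_filter.1 hC).2.closure_carrier ▸ measurableSet_projSet_polyhedron _ _ k
  have : Fact (volume (Metric.ball (0 : V n) R) < ⊤) := ⟨measure_ball_lt_top⟩
  rw [← measureReal_restrict_apply_univ, ← sum_measureReal_eq_of_ae_card_eq hmeas
    (ae_restrict_of_ae (ae_card_isChamber_mem_projSet A k))]
  exact sum_congr rfl fun C hC => (measureReal_restrict_apply (hmeas C hC)).symm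

open scoped Classical in
theorem sum_isChamber_eq_whitneySum {A : Finset (AffForm n)} {v : Face A → ℕ → ℝ}
    (hv : ∀ C, HasIntrinsicVolumes (closure (Face.carrier A C)) (v C)) (k : ℕ) :
    ∑ C with IsChamber A C, v C k = (-1) ^ (n + k) * whitneySum ⊤ A k := by
  refine tendsto_nhds_unique (tendsto_finsetSum _ fun C _ => hv C k)
    (tendsto_const_nhds.congr' ?_)
  filter_upwards [Filter.eventually_gt_atTop 0] with R hR
  have hball : volume.real (Metric.ball (0 : V n) R) ≠ 0 :=
    (ENNReal.toReal_pos (Metric.measure_ball_pos _ _ hR).ne' measure_ball_lt_top.ne).ne'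
  rw [← sum_div]
  exact (eq_div_iff hball).2 (sum_volume_projSet_inter_ball A k R).symm

end IntrinsicVolumes

section WhitneyNumber

variable {A S : Finset (AffForm n)}

lemma isFlat_flat (hS : S ⊆ A) (hne : (flat ⊤ S : Set (V n)).Nonempty) :
    IsFlat A (flat ⊤ S : Set (V n)) := by
  refine ⟨hne, (·.1 ∈ S), ?_⟩
  ext p
  simp only [SetLike.mem_coe, mem_flat, AffineSubspace.mem_top, true_and, Set.mem_iInter,
    Set.mem_ofPred_eq, hypSet]
  exact ⟨fun h ℓ => h ℓ, fun h ℓ hℓ => h ⟨ℓ, hS hℓ⟩ hℓ⟩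

open scoped Classical in
/-- Whitney's signed count of the subsets of `A` that cut out the flat `Y`. -/
def whitneyNumber (A : Finset (AffForm n)) (Y : Flat A) : ℤ :=
  ∑ S ∈ A.powerset with (flat ⊤ S : Set (V n)) = Y.1, (-1) ^ #S

open scoped Classical in
lemma sum_whitneyNumber (A : Finset (AffForm n)) (P : Set (V n) → Prop)
    [DecidablePred P] :
    ∑ Y : Flat A with P Y.1, whitneyNumber A Y =
      ∑ S ∈ A.powerset with (flat ⊤ S : Set (V n)).Nonempty ∧ P (flat ⊤ S), (-1) ^ #S := by
  have hdisj : (univ.filter fun Y : Flat A => P Y.1 : Set (Flat A)).PairwiseDisjoint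
      fun Y => A.powerset.filter fun S => (flat ⊤ S : Set (V n)) = Y.1 := fun Y _ Z _ hYZ =>
    disjoint_filter.2 fun S _ hY hZ => hYZ (Subtype.ext (hY.symm.trans hZ))
  simp only [whitneyNumber]
  rw [← sum_biUnion hdisj]
  refine sum_congr ?_ fun _ _ => rfl
  ext S
  simp only [mem_biUnion, mem_filter, mem_univ, true_and]
  constructor
  · rintro ⟨Y, hP, hS, hY⟩
    rw [hY]
    exact ⟨hS, Y.2.1, hP⟩
  · rintro ⟨hS, hne, hP⟩
    exact ⟨⟨_, isFlat_flat (mem_powerset.1 hS) hne⟩, hP, hS, rfl⟩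

instance : OrderTop (Flat A) where
  top := topFlat A
  le_top Y := Set.subset_univ Y.1

open scoped Classical in
instance : LocallyFiniteOrder (Flat A) := Fintype.toLocallyFiniteOrder

lemma Flat.eq_top_iff (hA : ∀ ℓ ∈ A, ℓ.linear ≠ 0) {X : Flat A} :
    X = ⊤ ↔ ∀ ℓ ∈ A, ¬ X.1 ⊆ hypSet ℓ := by
  constructor
  · rintro rfl ℓ hℓ h
    have : ℓ = 0 := AffineMap.ext fun p => h (Set.mem_univ p)
    exact hA ℓ hℓ (by rw [this, AffineMap.zero_linear])
  · intro h
    refine Subtype.ext ((flat_eq_inter A X).trans (Set.eq_univ_of_forall fun p => ?_))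
    exact Set.mem_iInter₂.2 fun ℓ hℓ => absurd hℓ (h ℓ.1 ℓ.2)

open scoped Classical in
lemma sum_whitneyNumber_Ici (hA : ∀ ℓ ∈ A, ℓ.linear ≠ 0) (X : Flat A) :
    ∑ Y ∈ Ici X, whitneyNumber A Y = if X = ⊤ then 1 else 0 := by
  have hsubsets : {S ∈ A.powerset | (flat ⊤ S : Set (V n)).Nonempty ∧ X.1 ⊆ flat ⊤ S} =
      ({ℓ ∈ A | X.1 ⊆ hypSet ℓ} : Finset (AffForm n)).powerset := by
    ext S
    have hX : X.1 ⊆ flat ⊤ S ↔ ∀ ℓ ∈ S, X.1 ⊆ hypSet ℓ :=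
      ⟨fun h ℓ hℓ p hp => (mem_flat.1 (h hp)).2 ℓ hℓ,
        fun h p hp => mem_flat.2 ⟨trivial, fun ℓ hℓ => h ℓ hℓ hp⟩⟩
    rw [mem_filter, mem_powerset, mem_powerset, and_iff_right_of_imp fun h => X.2.1.mono h, hX]
    simp only [subset_iff, mem_filter, forall_and]
  have hIci : Ici X = univ.filter fun Y : Flat A => X.1 ⊆ Y.1 := by
    ext Y
    rw [mem_Ici, mem_filter_univ]
    rfl
  rw [hIci, sum_whitneyNumber A (X.1 ⊆ ·), hsubsets, sum_powerset_neg_one_pow_card]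
  simp only [filter_eq_empty_iff, Flat.eq_top_iff hA]

open scoped Classical in
lemma IsMoebius.eq_mu {μ : Flat A → Flat A → ℝ} (hμ : IsMoebius A μ) (X Y : Flat A) :
    μ X Y = IncidenceAlgebra.mu ℝ X Y := by
  let μ' : IncidenceAlgebra ℝ (Flat A) := ⟨μ, fun X Y => hμ.2.2 X Y⟩
  have hinv : μ' * IncidenceAlgebra.zeta ℝ = 1 := by
    ext X Y hXY
    have hsum : ∑ Z ∈ Icc X Y, μ X Z = if X = Y then 1 else 0 := by
      split_ifs with h
      · rw [h, Icc_self, sum_singleton, hμ.1]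
      · rw [← hμ.2.1 X Y (lt_of_le_of_ne hXY h), ← sum_filter]
        exact sum_congr (by ext Z; simp) fun _ _ => rfl
    rw [IncidenceAlgebra.mul_apply, IncidenceAlgebra.one_apply, ← hsum]
    exact sum_congr rfl fun Z hZ => by
      rw [IncidenceAlgebra.zeta_of_le (mem_Icc.1 hZ).2, mul_one]; rfl
  rw [← left_inv_eq_right_inv hinv (IncidenceAlgebra.zeta_mul_mu)]
  rfl

open scoped Classical in
lemma moebius_topFlat_eq_whitneyNumber (hA : ∀ ℓ ∈ A, ℓ.linear ≠ 0) {μ : Flat A → Flat A → ℝ}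
    (hμ : IsMoebius A μ) (X : Flat A) : μ X (topFlat A) = whitneyNumber A X := by
  rw [hμ.eq_mu, IncidenceAlgebra.moebius_inversion_top (fun Y => (whitneyNumber A Y : ℝ))
    (fun Y => if Y = ⊤ then 1 else 0)]
  · simp only [mul_ite, mul_one, mul_zero, sum_ite_eq', mem_Ici, le_top, if_true]
    rfl
  · intro Y
    exact_mod_cast (sum_whitneyNumber_Ici hA Y).symm

open scoped Classical in
theorem sum_moebius_topFlat_eq_whitneySum (hA : ∀ ℓ ∈ A, ℓ.linear ≠ 0)
    {μ : Flat A → Flat A → ℝ} (hμ : IsMoebius A μ) (k : ℕ) :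
    ∑ Y : Flat A with dimS Y.1 = k, μ Y (topFlat A) = whitneySum ⊤ A k := by
  simp only [moebius_topFlat_eq_whitneyNumber hA hμ]
  rw [← Int.cast_sum, sum_whitneyNumber A (dimS · = k)]
  rfl

lemma le_dimS_of_isMin {d : ℕ} (hd : ∀ X : Flat A, IsMin X → dimS X.1 = d) (X : Flat A) :
    d ≤ dimS X.1 := by
  obtain ⟨Y, hYX, hY⟩ := exists_minimal_le_of_wellFoundedLT (fun _ => True) X trivial
  exact hd Y (minimal_true.1 hY) ▸ Submodule.finrank_mono (vectorSpan_mono ℝ hYX)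

end WhitneyNumber

open Classical in
/-- **Klivans–Swartz relation.** For `0 ≤ j ≤ rk 𝒜`, the coefficient of `t^j` in the
characteristic polynomial `χ(𝒜, t) = Σ_Y μ(Y,⊤) t^{rk Y}`, namely
`Σ_{Y : rk Y = j} μ(Y, ⊤)`, equals `(-1)^{rk 𝒜 - j} Σ_C v_{j+d}(cl C)`,
the sum over all chambers `C`. -/
theorem klivans_swartz {n : ℕ} (𝒜 : Finset (AffForm n))
    (h𝒜 : ∀ ℓ ∈ 𝒜, ℓ.linear ≠ 0)
    (d : ℕ) (hd : ∀ X : Flat 𝒜, IsMin X → dimS X.1 = d)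
    (μ : Flat 𝒜 → Flat 𝒜 → ℝ) (hμ : IsMoebius 𝒜 μ)
    (v : Face 𝒜 → ℕ → ℝ)
    (hv : ∀ F : Face 𝒜, HasIntrinsicVolumes (closure (Face.carrier 𝒜 F)) (v F))
    (j : ℕ) (hj : j ≤ n - d) :
    (∑ Y : Flat 𝒜, if dimS Y.1 - d = j then μ Y (topFlat 𝒜) else 0)
      = (-1 : ℝ) ^ ((n - d) - j) *
          ∑ C : Face 𝒜, if IsChamber 𝒜 C then v C (j + d) else 0 := by
  have hdim : ∀ Y : Flat 𝒜, dimS Y.1 - d = j ↔ dimS Y.1 = j + d := fun Y => by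
    have := le_dimS_of_isMin hd Y
    omega
  have hdn : d ≤ n := affineDim_top (n := n) ▸ le_dimS_of_isMin hd (topFlat 𝒜)
  have hsign : (-1 : ℝ) ^ (n - d - j) * (-1) ^ (n + (j + d)) = 1 := by
    rw [← pow_add, show n - d - j + (n + (j + d)) = 2 * n by omega, pow_mul, neg_one_sq, one_pow]
  simp only [hdim, ← sum_filter]
  rw [sum_moebius_topFlat_eq_whitneySum h𝒜 hμ, sum_isChamber_eq_whitneySum hv, ← mul_assoc, hsign,
    one_mul]

end CharElts
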